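/- Let R = K[a,b,c,x,y,z] and I = (a^k b^k, b^m c^m, a^p x^p, b^q y^q, c^r z^r) with positive integers k < m and p, q, r. If R/I^n is Cohen-Macaulay for all n ≥ 1, then p ≥ k·⌈m/(m−k)⌉. -/

import Mathlib

open MvPolynomial

/-- `R/I` is Cohen–Macaulay: there is a regular sequence on `R/I` contained in the
maximal ideal generated by the variables whose length equals the Krull dimension of `R/I`. -/
def IsCMQuot {K : Type*} [Field K] {σ : Type*} (I : Ideal (MvPolynomial σ K)) : Prop :=
  ∃ rs : List (MvPolynomial σ K),
    (∀ r ∈ rs, r ∈ Ideal.span (Set.range (X : σ → MvPolynomial σ K))) ∧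
    RingTheory.Sequence.IsRegular (MvPolynomial σ K ⧸ I) rs ∧
    (rs.length : WithBot (WithTop ℕ)) = ringKrullDim (MvPolynomial σ K ⧸ I)

/-!
If `R/J` is Cohen–Macaulay, a maximal regular sequence climbs a chain of primes above any
associated prime `Q` of `R/J` inside the ideal of the variables, so `dim R/J ≤ dim R/Q`. Hence, if
`J` lies in an ideal generated by the variables in `t` and some monomial `u ∉ J` is carried into
`J` by a power of each variable in `v`, then `|v| ≤ |t|`.

For `J = I^n` take `t = {a, b, c}`, a vertex cover of the tree. Let `s = ⌈m/(m-k)⌉ ≤ n` and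
suppose `p < ks`. The monomial `u = a^p b^{m(s-1)} c^M z^{r(n-s)}` with `M` large is not in `I^n`:
a product of `n` generators dividing it has at most `n - s` factors from `cz`, none from `ax` or
`by`, and `i < s` factors from `ab`, so comparing powers of `b` gives `m ≤ (m-k)i`, against the
definition of `s`. Powers of `a`, `b`, `x` and `z` carry `u` into `I^n`, through `s` factors `ab`,
`s` factors `bc`, one factor `ax` with `s - 1` factors `bc`, and `s` further factors `cz`
respectively. So `4 ≤ 3`, a contradiction.
-/

section RegularSequence

open scoped Pointwise

variable {R M : Type*} [CommRing R] [AddCommGroup M] [Module R M]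

theorem ringKrullDim_quotient_anti {I J : Ideal R} (h : I ≤ J) :
    ringKrullDim (R ⧸ J) ≤ ringKrullDim (R ⧸ I) :=
  ringKrullDim_le_of_surjective (Ideal.Quotient.factor h) (Ideal.Quotient.factor_surjective h)

theorem coheight_eq_ringKrullDim_quotient (P : PrimeSpectrum R) :
    (Order.coheight P : WithBot ℕ∞) = ringKrullDim (R ⧸ P.asIdeal) := by
  have : Set.Ici P = PrimeSpectrum.zeroLocus (P.asIdeal : Set R) := by ext Q; rfl
  rw [ringKrullDim_quotient, Order.coheight_eq_krullDim_Ici, this]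

theorem quotSMulTop_map_torsionBySet_subtype_injective (s : Set R) {x : R}
    (hx : IsSMulRegular M x) :
    Function.Injective (QuotSMulTop.map x (Submodule.torsionBySet R M s).subtype) := by
  set N := Submodule.torsionBySet R M s
  have hxN : IsSMulRegular (M ⧸ N) x := by
    rw [isSMulRegular_quotient_iff_mem_of_smul_mem]
    intro v hv
    rw [Submodule.mem_torsionBySet_iff] at hv ⊢
    exact fun a ↦ hx.right_eq_zero_of_smul (by rw [smul_comm, hv a])
  have hexact : Function.Exact (0 : PUnit →ₗ[R] N) N.subtype :=
    (LinearMap.exact_zero_iff_injective PUnit N.subtype).2 N.subtype_injective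
  have := QuotSMulTop.map_first_exact_on_four_term_exact_of_isSMulRegular_last hexact
    (LinearMap.exact_subtype_mkQ N) hxN
  rw [map_zero] at this
  exact (LinearMap.exact_zero_iff_injective _ _).1 this

variable [IsNoetherianRing R]

theorem exists_mem_associatedPrimes_of_annihilator_le [Module.Finite R M] {𝔪 : PrimeSpectrum R}
    (h : Module.annihilator R M ≤ 𝔪.asIdeal) :
    ∃ Q : PrimeSpectrum R,
      Q.asIdeal ∈ associatedPrimes R M ∧ Module.annihilator R M ≤ Q.asIdeal ∧ Q ≤ 𝔪 := by
  obtain ⟨Q, hQ, hQ𝔪⟩ := Ideal.exists_minimalPrimes_le h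
  exact ⟨⟨Q, hQ.isPrime⟩,
    Module.associatedPrimes.minimalPrimes_annihilator_subset_associatedPrimes R M hQ, hQ.1.2, hQ𝔪⟩

theorem exists_mem_associatedPrimes_of_colon_le {𝔪 : PrimeSpectrum R} {w : M}
    (h : (⊥ : Submodule R M).colon {w} ≤ 𝔪.asIdeal) :
    ∃ Q : PrimeSpectrum R, Q.asIdeal ∈ associatedPrimes R M ∧
      (⊥ : Submodule R M).colon {w} ≤ Q.asIdeal ∧ Q ≤ 𝔪 := by
  have hann : Module.annihilator R (R ∙ w) = (⊥ : Submodule R M).colon {w} := by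
    ext a
    rw [Submodule.mem_colon_singleton, Submodule.mem_bot]
    exact Submodule.mem_annihilator_span_singleton w a
  rw [← hann] at h ⊢
  obtain ⟨Q, hQ, hle, hQ𝔪⟩ := exists_mem_associatedPrimes_of_annihilator_le h
  exact ⟨Q, hQ.map_of_injective (R ∙ w).subtype (R ∙ w).subtype_injective, hle, hQ𝔪⟩

-- With `N` the submodule of `M` killed by `P`, the module `N / xN` embeds into `M / xM`, and its
-- annihilator contains both `P` and `x ∉ P`.
theorem exists_gt_mem_associatedPrimes_quotSMulTop [Module.Finite R M] {𝔪 P : PrimeSpectrum R}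
    (hP : P.asIdeal ∈ associatedPrimes R M) (hP𝔪 : P ≤ 𝔪) {x : R} (hx𝔪 : x ∈ 𝔪.asIdeal)
    (hx : IsSMulRegular M x) :
    ∃ Q : PrimeSpectrum R, Q.asIdeal ∈ associatedPrimes R (QuotSMulTop x M) ∧ P < Q ∧ Q ≤ 𝔪 := by
  obtain ⟨-, w, hw⟩ := isAssociatedPrime_iff.1 hP
  set N := Submodule.torsionBySet R M P.asIdeal
  have mem_P (a : R) : a ∈ P.asIdeal ↔ a • w = 0 := by
    rw [hw, Submodule.mem_colon_singleton, Submodule.mem_bot]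
  have hwN : w ∈ N := (Submodule.mem_torsionBySet_iff _ _).2 fun a ↦ (mem_P a).1 a.2
  have hannN : Module.annihilator R N ≤ P.asIdeal := fun a ha ↦
    (mem_P a).2 (congrArg Subtype.val (Module.mem_annihilator.1 ha ⟨w, hwN⟩))
  have hsupp : 𝔪 ∈ Module.support R (QuotSMulTop x N) := by
    rw [Module.support_quotSMulTop]
    exact ⟨Module.mem_support_iff_of_finite.2 (hannN.trans hP𝔪), by simpa using hx𝔪⟩
  obtain ⟨Q, hQ, hannQ, hQ𝔪⟩ := exists_mem_associatedPrimes_of_annihilator_le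
    (Module.mem_support_iff_of_finite.1 hsupp)
  have hannNQ : Module.annihilator R N ≤ Q.asIdeal :=
    ((x • ⊤ : Submodule R N).mkQ.annihilator_le_of_surjective (Submodule.mkQ_surjective _)).trans
      hannQ
  have hPann : P.asIdeal ≤ Module.annihilator R N :=
    (Module.isTorsionBySet_iff_subset_annihilator R N).1
      (Submodule.torsionBySet_isTorsionBySet (P.asIdeal : Set R))
  have hxP : x ∉ P.asIdeal := fun hxP ↦ P.isPrime.one_notMem <| (mem_P 1).2 <| by
    rw [one_smul, hx.right_eq_zero_of_smul ((mem_P x).1 hxP)]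
  refine ⟨Q, hQ.map_of_injective _ (quotSMulTop_map_torsionBySet_subtype_injective _ hx),
    lt_of_le_of_ne (hPann.trans hannNQ) ?_, hQ𝔪⟩
  rintro rfl
  exact hxP (hannQ (QuotSMulTop.mem_annihilator _ x))

theorem length_le_coheight_of_mem_associatedPrimes [Module.Finite R M] {𝔪 P : PrimeSpectrum R}
    (hP : P.asIdeal ∈ associatedPrimes R M) (hP𝔪 : P ≤ 𝔪) {rs : List R}
    (hrs : RingTheory.Sequence.IsWeaklyRegular M rs) (hrs𝔪 : ∀ r ∈ rs, r ∈ 𝔪.asIdeal) :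
    (rs.length : ℕ∞) ≤ Order.coheight P := by
  induction rs generalizing M P with
  | nil => simp
  | cons x rs ih =>
    rw [RingTheory.Sequence.isWeaklyRegular_cons_iff] at hrs
    rw [List.forall_mem_cons] at hrs𝔪
    obtain ⟨Q, hQ, hPQ, hQ𝔪⟩ := exists_gt_mem_associatedPrimes_quotSMulTop hP hP𝔪 hrs𝔪.1 hrs.1
    calc ((x :: rs).length : ℕ∞) = rs.length + 1 := by simp
      _ ≤ Order.coheight Q + 1 := by gcongr; exact ih hQ hQ𝔪 hrs.2 hrs𝔪.2
      _ ≤ Order.coheight P := Order.coheight_add_one_le hPQ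

end RegularSequence

section CoordinateSubspace

variable {σ R : Type*} [CommRing R]

theorem ker_killCompl_compl (s : Set σ) :
    RingHom.ker (killCompl (R := R) (Subtype.val_injective (p := (· ∈ sᶜ)))) =
      Ideal.span (X '' s) := by
  set ι := Subtype.val_injective (p := (· ∈ sᶜ))
  have killCompl_X {i : σ} (hi : i ∈ s) : killCompl (R := R) ι (X i) = 0 := by
    simp [killCompl, hi]
  apply le_antisymm
  · have hmk : ((Ideal.Quotient.mkₐ R (Ideal.span (X '' s))).comp (rename Subtype.val)).comp
        (killCompl ι) = Ideal.Quotient.mkₐ R (Ideal.span (X '' s)) := by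
      ext i
      by_cases hi : i ∈ s
      · simpa [killCompl_X hi] using
          (Ideal.Quotient.eq_zero_iff_mem.2 (Ideal.subset_span (Set.mem_image_of_mem X hi))).symm
      · have : killCompl (R := R) ι (X i) = X ⟨i, hi⟩ := by
          simpa only [rename_X] using killCompl_rename_app (R := R) ι (X ⟨i, hi⟩)
        simp [this]
    intro f hf
    rw [← Ideal.Quotient.eq_zero_iff_mem, ← Ideal.Quotient.mkₐ_eq_mk R, ← hmk]
    simp [(RingHom.mem_ker).1 hf]
  · rw [Ideal.span_le]
    rintro _ ⟨i, hi, rfl⟩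
    exact killCompl_X hi

theorem ringKrullDim_quotient_span_X_image [IsNoetherianRing R] [Finite σ] (s : Set σ) :
    ringKrullDim (MvPolynomial σ R ⧸ Ideal.span (X '' s : Set (MvPolynomial σ R))) =
      ringKrullDim R + sᶜ.ncard := by
  have hsurj : Function.Surjective (killCompl (R := R) (Subtype.val_injective (p := (· ∈ sᶜ)))) :=
    fun f ↦ ⟨_, killCompl_rename_app _ f⟩
  rw [← ker_killCompl_compl,
    (Ideal.quotientKerAlgEquivOfSurjective hsurj).toRingEquiv.ringKrullDim,
    MvPolynomial.ringKrullDim_of_isNoetherianRing]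
  rfl

theorem ker_constantCoeff_eq_idealOfVars :
    RingHom.ker (constantCoeff (R := R) (σ := σ)) = idealOfVars σ R := by
  ext f
  rw [← pow_one (idealOfVars σ R), mem_pow_idealOfVars_iff', RingHom.mem_ker]
  simp [Finsupp.degree_eq_zero_iff, constantCoeff_eq]

instance idealOfVars_isPrime [IsDomain R] : (idealOfVars σ R).IsPrime :=
  ker_constantCoeff_eq_idealOfVars (R := R) (σ := σ) ▸ RingHom.ker_isPrime _

end CoordinateSubspace

section CohenMacaulay

variable {σ K : Type*} [Field K] [Finite σ]

theorem IsCMQuot.ringKrullDim_le_of_mem_associatedPrimes {J Q : Ideal (MvPolynomial σ K)}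
    (hJ : IsCMQuot J) (hQ : Q ∈ associatedPrimes (MvPolynomial σ K) (MvPolynomial σ K ⧸ J))
    (hQvars : Q ≤ idealOfVars σ K) :
    ringKrullDim (MvPolynomial σ K ⧸ J) ≤ ringKrullDim (MvPolynomial σ K ⧸ Q) := by
  obtain ⟨rs, hrs_mem, hrs, hlength⟩ := hJ
  let P : PrimeSpectrum (MvPolynomial σ K) := ⟨Q, hQ.isPrime⟩
  let 𝔪 : PrimeSpectrum (MvPolynomial σ K) := ⟨idealOfVars σ K, idealOfVars_isPrime⟩
  rw [← hlength, ← coheight_eq_ringKrullDim_quotient P]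
  exact WithBot.coe_le_coe.2
    (length_le_coheight_of_mem_associatedPrimes (𝔪 := 𝔪) hQ hQvars hrs.toIsWeaklyRegular hrs_mem)

theorem IsCMQuot.ncard_le_of_mem_radical_colon {J : Ideal (MvPolynomial σ K)} (hJ : IsCMQuot J)
    {s t : Set σ} (ht : J ≤ Ideal.span (X '' t)) {u : MvPolynomial σ K}
    (hu : J.colon {u} ≤ idealOfVars σ K) (hs : ∀ i ∈ s, X i ∈ (J.colon {u}).radical) :
    s.ncard ≤ t.ncard := by
  have hcolon : (⊥ : Submodule _ (MvPolynomial σ K ⧸ J)).colon {Submodule.Quotient.mk u} =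
      J.colon {u} := by
    ext f
    rw [Submodule.mem_colon_singleton, Submodule.mem_colon_singleton, Submodule.mem_bot,
      ← Submodule.Quotient.mk_smul, Submodule.Quotient.mk_eq_zero]
  obtain ⟨Q, hQ, hcolonQ, hQvars⟩ := exists_mem_associatedPrimes_of_colon_le
    (𝔪 := ⟨idealOfVars σ K, idealOfVars_isPrime⟩) (hcolon.trans_le hu)
  have hsQ : Ideal.span (X '' s) ≤ Q.asIdeal := by
    rw [Ideal.span_le]
    rintro _ ⟨i, hi, rfl⟩
    exact Q.isPrime.radical_le_iff.2 (hcolon.ge.trans hcolonQ) (hs i hi)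
  have hcoord (w : Set σ) : ringKrullDim
      (MvPolynomial σ K ⧸ Ideal.span (X '' w : Set (MvPolynomial σ K))) = wᶜ.ncard := by
    rw [ringKrullDim_quotient_span_X_image, ringKrullDim_eq_zero_of_field, zero_add]
  have hdim := calc
    (tᶜ.ncard : WithBot ℕ∞)
      = ringKrullDim (MvPolynomial σ K ⧸ Ideal.span (X '' t : Set (MvPolynomial σ K))) :=
        (hcoord t).symm
    _ ≤ ringKrullDim (MvPolynomial σ K ⧸ J) := ringKrullDim_quotient_anti ht
    _ ≤ ringKrullDim (MvPolynomial σ K ⧸ Q.asIdeal) :=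
        hJ.ringKrullDim_le_of_mem_associatedPrimes hQ hQvars
    _ ≤ ringKrullDim (MvPolynomial σ K ⧸ Ideal.span (X '' s : Set (MvPolynomial σ K))) :=
        ringKrullDim_quotient_anti hsQ
    _ = sᶜ.ncard := hcoord s
  have : tᶜ.ncard ≤ sᶜ.ncard := by exact_mod_cast hdim
  have := s.ncard_add_ncard_compl
  have := t.ncard_add_ncard_compl
  lia

end CohenMacaulay

section MonomialIdeal

variable {ι σ R : Type*} [CommRing R]

theorem span_range_monomial_pow [Fintype ι] (e : ι → σ →₀ ℕ) (n : ℕ) :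
    Ideal.span (Set.range fun i ↦ monomial (e i) (1 : R)) ^ n =
      Ideal.span ((monomial · 1) '' ((fun c : ι → ℕ ↦ ∑ i, c i • e i) '' {c | ∑ i, c i = n})) := by
  rw [Ideal.span, Submodule.span_pow, ← Set.image_univ, Finsupp.image_pow_eq_finsuppProd_image,
    Set.image_image]
  have hprod (c : ι →₀ ℕ) :
      (c.prod fun i a ↦ monomial (e i) (1 : R) ^ a) = monomial (∑ i, c i • e i) 1 := by
    rw [Finsupp.prod_fintype _ _ fun _ ↦ pow_zero _]
    simp only [monomial_pow, one_pow, monomial_sum_one]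
  have hindex : {c : ι → ℕ | ∑ i, c i = n} = (⇑) '' {c : ι →₀ ℕ | c.degree = n} := by
    ext c
    simp only [Finsupp.degree_eq_sum, Set.mem_ofPred_eq, Set.mem_image]
    exact ⟨fun hc ↦ ⟨Finsupp.equivFunOnFinite.symm c, hc, rfl⟩, by rintro ⟨c, hc, rfl⟩; exact hc⟩
  simp only [hprod, hindex, Set.image_image, Set.subset_univ, and_true]

theorem monomial_mem_span_range_monomial_pow_iff [Nontrivial R] [Fintype ι] {e : ι → σ →₀ ℕ}
    {n : ℕ} {u : σ →₀ ℕ} :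
    monomial u (1 : R) ∈ Ideal.span (Set.range fun i ↦ monomial (e i) (1 : R)) ^ n ↔
      ∃ c : ι → ℕ, ∑ i, c i = n ∧ ∑ i, c i • e i ≤ u := by
  classical
  rw [span_range_monomial_pow, mem_ideal_span_monomial_image]
  simp [support_monomial]

theorem colon_monomial_le_idealOfVars [Nontrivial R] {S : Set (σ →₀ ℕ)} {u : σ →₀ ℕ}
    (hu : monomial u (1 : R) ∉ Ideal.span ((monomial · 1) '' S)) :
    (Ideal.span ((monomial · (1 : R)) '' S)).colon {monomial u 1} ≤ idealOfVars σ R := by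
  intro f hf
  rw [← ker_constantCoeff_eq_idealOfVars, RingHom.mem_ker, constantCoeff_eq]
  rw [Submodule.mem_colon_singleton, smul_eq_mul, mem_ideal_span_monomial_image] at hf
  classical
  rw [mem_ideal_span_monomial_image] at hu
  simp only [support_monomial, one_ne_zero, ↓reduceIte, Finset.mem_singleton, forall_eq] at hu
  by_contra hf0
  exact hu (hf u (by simpa [coeff_mul_monomial'] using hf0))

theorem span_range_monomial_le_span_X_image {e : ι → σ →₀ ℕ} {t : Set σ}
    (ht : ∀ i, ∃ v ∈ t, e i v ≠ 0) :
    Ideal.span (Set.range fun i ↦ monomial (e i) (1 : R)) ≤ Ideal.span (X '' t) := by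
  rw [Ideal.span_le]
  rintro _ ⟨i, rfl⟩
  rw [SetLike.mem_coe, mem_ideal_span_X_image]
  intro w hw
  rw [Finset.mem_singleton.1 (support_monomial_subset hw)]
  exact ht i

theorem IsCMQuot.ncard_le_of_span_monomial_pow {K : Type*} [Field K] [Finite σ] [Finite ι]
    {e : ι → σ →₀ ℕ} {n : ℕ} (hn : n ≠ 0)
    (hCM : IsCMQuot (Ideal.span (Set.range fun i ↦ monomial (e i) (1 : K)) ^ n))
    {t : Set σ} (ht : ∀ i, ∃ v ∈ t, e i v ≠ 0) {u : σ →₀ ℕ}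
    (hu : monomial u (1 : K) ∉ Ideal.span (Set.range fun i ↦ monomial (e i) (1 : K)) ^ n)
    {s : Set σ} (hs : ∀ v ∈ s, ∃ N, monomial (u + Finsupp.single v N) (1 : K) ∈
      Ideal.span (Set.range fun i ↦ monomial (e i) (1 : K)) ^ n) :
    s.ncard ≤ t.ncard := by
  cases nonempty_fintype ι
  refine hCM.ncard_le_of_mem_radical_colon
    ((Ideal.pow_le_self hn).trans (span_range_monomial_le_span_X_image ht))
    (u := monomial u 1) ?_ fun v hv ↦ ?_
  · rw [span_range_monomial_pow] at hu ⊢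
    exact colon_monomial_le_idealOfVars hu
  · obtain ⟨N, hN⟩ := hs v hv
    refine ⟨N, Submodule.mem_colon_singleton.2 ?_⟩
    rwa [X_pow_eq_monomial, smul_eq_mul, monomial_mul, one_mul, add_comm]

end MonomialIdeal

theorem ceilDiv_pos_of_pos {a b : ℕ} (ha : 0 < a) (hb : 0 < b) : 0 < b ⌈/⌉ a := by
  by_contra! h
  exact hb.not_ge ((ceilDiv_le_iff_le_mul ha).1 h)

theorem exists_ceilDiv_sub_eq_add_one {k m : ℕ} (hkm : k < m) :
    ∃ t, m ⌈/⌉ (m - k) = t + 1 ∧ m * t < k * t + m ∧ k * (t + 1) ≤ m * t := by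
  obtain ⟨d, hd, rfl⟩ := exists_pos_add_of_lt' hkm
  rw [Nat.add_sub_cancel_left]
  have hpos : 0 < (k + d) ⌈/⌉ d := ceilDiv_pos_of_pos hd (Nat.add_pos_right k hd)
  obtain ⟨t, ht⟩ := Nat.exists_eq_add_one_of_ne_zero hpos.ne'
  have lower : ¬ k + d ≤ d * t := fun h ↦ by
    have := (ceilDiv_le_iff_le_mul hd).2 h
    lia
  have upper : k + d ≤ d * (t + 1) := (ceilDiv_le_iff_le_mul hd).1 ht.le
  exact ⟨t, ht, by lia, by lia⟩

section Tree

/-- The weighted edge ideal of the path `x - a - b - c - z` with one more leaf `y` attached to `b`,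
the edges `ab, bc, ax, by, cz` having weights `k, m, p, q, r`. The variables `a, b, c, x, y, z`
are `X 0, …, X 5`. -/
noncomputable def treeIdeal (K : Type*) [Field K] (k m p q r : ℕ) :
    Ideal (MvPolynomial (Fin 6) K) :=
  Ideal.span {(X 0) ^ k * (X 1) ^ k, (X 1) ^ m * (X 2) ^ m, (X 0) ^ p * (X 3) ^ p,
    (X 1) ^ q * (X 4) ^ q, (X 2) ^ r * (X 5) ^ r}

/-- The exponent vectors of the five generators of `treeIdeal`, in the order
`ab`, `bc`, `ax`, `by`, `cz`. -/
noncomputable def treeExponent (k m p q r : ℕ) : Fin 5 → Fin 6 →₀ ℕ :=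
  ![.single 0 k + .single 1 k, .single 1 m + .single 2 m, .single 0 p + .single 3 p,
    .single 1 q + .single 4 q, .single 2 r + .single 5 r]

/-- The exponent vector of a monomial `a^p b^{mt} c^M z^{rj}` with `M` large. If
`t + 1 = ⌈m/(m-k)⌉` and `p < k(t+1)`, this monomial is not in the `(t+1+j)`-th power of `treeIdeal`,
but multiplying it by a large power of any one of `a`, `b`, `x`, `z` brings it in. -/
noncomputable def witnessExponent (m p r t j : ℕ) : Fin 6 →₀ ℕ :=
  Finsupp.equivFunOnFinite.symm ![p, m * t, m * (t + 1) + r * (t + 1 + j), 0, 0, r * j]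

variable {K : Type*} [Field K] {k m p q r n t j : ℕ}

theorem treeIdeal_eq_span_range_monomial :
    treeIdeal K k m p q r =
      Ideal.span (Set.range fun i ↦ monomial (treeExponent k m p q r i) (1 : K)) := by
  rw [treeIdeal]
  congr 1
  ext f
  simp [treeExponent, Fin.exists_fin_succ, X_pow_eq_monomial, monomial_mul, eq_comm]

theorem monomial_mem_treeIdeal_pow_iff {u : Fin 6 →₀ ℕ} :
    monomial u (1 : K) ∈ treeIdeal K k m p q r ^ n ↔
      ∃ ab bc ax yb zc : ℕ, ab + bc + ax + yb + zc = n ∧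
        k * ab + p * ax ≤ u 0 ∧ k * ab + m * bc + q * yb ≤ u 1 ∧ m * bc + r * zc ≤ u 2 ∧
        p * ax ≤ u 3 ∧ q * yb ≤ u 4 ∧ r * zc ≤ u 5 := by
  rw [treeIdeal_eq_span_range_monomial, monomial_mem_span_range_monomial_pow_iff]
  have hle (c : Fin 5 → ℕ) : ∑ i, c i • treeExponent k m p q r i ≤ u ↔
      k * c 0 + p * c 2 ≤ u 0 ∧ k * c 0 + m * c 1 + q * c 3 ≤ u 1 ∧ m * c 1 + r * c 4 ≤ u 2 ∧
        p * c 2 ≤ u 3 ∧ q * c 3 ≤ u 4 ∧ r * c 4 ≤ u 5 := by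
    simp [Finsupp.le_def, Fin.forall_fin_succ, Fin.sum_univ_succ, treeExponent, mul_comm, add_assoc]
  simp_rw [hle, Fin.sum_univ_five]
  constructor
  · rintro ⟨c, hc⟩
    exact ⟨c 0, c 1, c 2, c 3, c 4, hc⟩
  · rintro ⟨ab, bc, ax, yb, zc, h⟩
    exact ⟨![ab, bc, ax, yb, zc], h⟩

theorem IsCMQuot.ncard_le_three_of_treeIdeal_pow (hk : k ≠ 0) (hm : m ≠ 0) (hp : p ≠ 0)
    (hq : q ≠ 0) (hr : r ≠ 0) (hn : n ≠ 0) (hCM : IsCMQuot (treeIdeal K k m p q r ^ n))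
    {u : Fin 6 →₀ ℕ} (hu : monomial u (1 : K) ∉ treeIdeal K k m p q r ^ n) {s : Set (Fin 6)}
    (hs : ∀ v ∈ s, ∃ N, monomial (u + .single v N) (1 : K) ∈ treeIdeal K k m p q r ^ n) :
    s.ncard ≤ 3 := by
  rw [treeIdeal_eq_span_range_monomial] at hCM hu
  simp only [treeIdeal_eq_span_range_monomial] at hs
  have hcover : ∀ i, ∃ v ∈ ({0, 1, 2} : Set (Fin 6)), treeExponent k m p q r i v ≠ 0 := by
    simp [Fin.forall_fin_succ, treeExponent, *]
  simpa using hCM.ncard_le_of_span_monomial_pow hn hcover hu hs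

theorem monomial_witnessExponent_notMem_treeIdeal_pow (hp : 0 < p) (hq : 0 < q) (hr : 0 < r)
    (hkm : k ≤ m) (ht : m * t < k * t + m) (hpk : p < k * (t + 1)) :
    monomial (witnessExponent m p r t j) (1 : K) ∉ treeIdeal K k m p q r ^ (t + 1 + j) := by
  rw [monomial_mem_treeIdeal_pow_iff]
  rintro ⟨ab, bc, ax, yb, zc, hsum, ha, hb, -, hx, hy, hz⟩
  replace ha : k * ab + p * ax ≤ p := ha
  replace hb : k * ab + m * bc + q * yb ≤ m * t := hb
  obtain rfl : ax = 0 := (Nat.mul_eq_zero.1 (Nat.le_zero.1 hx)).resolve_left hp.ne'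
  obtain rfl : yb = 0 := (Nat.mul_eq_zero.1 (Nat.le_zero.1 hy)).resolve_left hq.ne'
  have hzc : zc ≤ j := Nat.le_of_mul_le_mul_left hz hr
  have hab : ab ≤ t := by
    by_contra! h
    have := Nat.mul_le_mul_left k h
    lia
  have hmab : k * ab + m ≤ m * ab := by
    have := Nat.mul_le_mul_left m (show t + 1 ≤ ab + bc by lia)
    lia
  obtain ⟨e, rfl⟩ := Nat.exists_eq_add_of_le hab
  have := Nat.mul_le_mul_right e hkm
  lia

theorem exists_monomial_witnessExponent_add_single_mem_treeIdeal_pow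
    (ht : k * (t + 1) ≤ m * t) :
    ∀ v ∈ ({0, 1, 3, 5} : Set (Fin 6)), ∃ N,
      monomial (witnessExponent m p r t j + .single v N) (1 : K) ∈
        treeIdeal K k m p q r ^ (t + 1 + j) := by
  simp only [monomial_mem_treeIdeal_pow_iff, Set.forall_mem_insert,
    Set.mem_singleton_iff, forall_eq]
  refine ⟨⟨k * (t + 1), t + 1, 0, 0, 0, j, ?_⟩, ⟨m, 0, t + 1, 0, 0, j, ?_⟩,
    ⟨p, 0, t, 1, 0, j, ?_⟩, ⟨r * (t + 1), 0, 0, 0, 0, t + 1 + j, ?_⟩⟩ <;>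
    simp [witnessExponent] <;> lia

end Tree

theorem p_lower_bound_of_cm_general {K : Type*} [Field K] {k m p q r n : ℕ}
    (hk : 0 < k) (hkm : k < m) (hp : 0 < p) (hq : 0 < q) (hr : 0 < r)
    (hn : m ⌈/⌉ (m - k) ≤ n) (hCM : IsCMQuot (treeIdeal K k m p q r ^ n)) :
    k * (m ⌈/⌉ (m - k)) ≤ p := by
  obtain ⟨t, hceil, ht_lt, ht_le⟩ := exists_ceilDiv_sub_eq_add_one hkm
  rw [hceil] at hn ⊢
  obtain ⟨j, rfl⟩ := Nat.exists_eq_add_of_le hn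
  by_contra! hpk
  have hcard : ({0, 1, 3, 5} : Set (Fin 6)).ncard ≤ 3 :=
    hCM.ncard_le_three_of_treeIdeal_pow hk.ne' (hk.trans hkm).ne' hp.ne' hq.ne' hr.ne' (by lia)
      (monomial_witnessExponent_notMem_treeIdeal_pow hp hq hr hkm.le ht_lt hpk)
      (exists_monomial_witnessExponent_add_single_mem_treeIdeal_pow ht_le)
  simp [Set.ncard_eq_toFinset_card'] at hcard

/-- For the weighted edge ideal `I = (a^k b^k, b^m c^m, a^p x^p, b^q y^q, c^r z^r)` of the
tree with edges `{ab, bc, ax, by, cz}` in `R = K[a,b,c,x,y,z]` (here `a = X 0`, `b = X 1`,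
`c = X 2`, `x = X 3`, `y = X 4`, `z = X 5`) with `k < m`: if `R/I^n` is Cohen–Macaulay
for all `n ≥ 1`, then `p ≥ k·⌈m/(m−k)⌉` (with `⌈m/(m−k)⌉ = (m + (m−k) − 1)/(m−k)` the
ceiling of `m/(m−k)`). -/
theorem p_lower_bound_of_cm {K : Type*} [Field K] (k m p q r : ℕ)
    (hk : 0 < k) (hkm : k < m) (hp : 0 < p) (hq : 0 < q) (hr : 0 < r)
    (hCM : ∀ n : ℕ, 1 ≤ n →
      IsCMQuot ((Ideal.span ({(X 0) ^ k * (X 1) ^ k, (X 1) ^ m * (X 2) ^ m,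
          (X 0) ^ p * (X 3) ^ p, (X 1) ^ q * (X 4) ^ q, (X 2) ^ r * (X 5) ^ r} :
          Set (MvPolynomial (Fin 6) K))) ^ n)) :
    k * ((m + (m - k) - 1) / (m - k)) ≤ p :=
  p_lower_bound_of_cm_general hk hkm hp hq hr le_rfl
    (hCM _ (ceilDiv_pos_of_pos (Nat.sub_pos_of_lt hkm) (hk.trans hkm)))
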